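/- Let α ∈ ℂ be an algebraic number of degree d over ℚ, let β ∈ ℚ(α) be irrational, let P, Q be a minimal pair for (α, β), and let W = P·Q′ − Q·P′ be the Wronskian of P and Q. Then W(α) ≠ 0, and there exists a positive real number C₁₃, depending only on α and β, such that |W(α)| ≥ C₁₃. -/

import Mathlib

/-!
Write `W(α) = -Q(α) · (P'(α) + β Q'(α))`, using `P(α) = -β Q(α)`.

* `Q(α) ≠ 0`: otherwise `P(α) = 0` too, so the nonzero one of `P`, `Q` has degree at least
  `d = deg α`. But writing `β` as a rational polynomial in `α` of degree `< d` and clearing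
  denominators gives a pair of degree `< d`, against condition (3).
* `P'(α) + β Q'(α) ≠ 0`: otherwise `(P', Q')` is a pair of smaller degree, so `P' = Q' = 0`;
  then `P`, `Q` are constants and `β` is rational.

All minimal pairs share the same maximal degree and the same height, hence there are only finitely
many of them, and the smallest value of `|W(α)|` among them is a positive lower bound.
-/


open Polynomial

/-- The height `H(P)` of an integer polynomial: the maximum of the absolute values of
its coefficients (as a natural number; `H(0) = 0`). -/
def polyHeight (P : Polynomial ℤ) : ℕ := P.support.sup fun i => (P.coeff i).natAbs

/-- `P, Q ∈ ℤ[x]`, not both identically zero, form a *minimal pair* for `(α, β)` if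
(1) `P, Q ∈ ℤ[x]`; (2) `P(α) + β·Q(α) = 0`; (3) `max (deg P, deg Q)` is minimal among
all pairs satisfying (1) and (2); (4) `max (H(P), H(Q))` is minimal among all pairs
satisfying (1), (2) and (3). -/
def IsMinimalPair {R : Type*} [CommRing R] (α β : R) (P Q : Polynomial ℤ) : Prop :=
  (¬(P = 0 ∧ Q = 0)) ∧
  (Polynomial.aeval α P + β * Polynomial.aeval α Q = 0) ∧
  (∀ P' Q' : Polynomial ℤ, ¬(P' = 0 ∧ Q' = 0) →
    Polynomial.aeval α P' + β * Polynomial.aeval α Q' = 0 →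
    max P.natDegree Q.natDegree ≤ max P'.natDegree Q'.natDegree) ∧
  (∀ P' Q' : Polynomial ℤ, ¬(P' = 0 ∧ Q' = 0) →
    Polynomial.aeval α P' + β * Polynomial.aeval α Q' = 0 →
    max P'.natDegree Q'.natDegree = max P.natDegree Q.natDegree →
    max (polyHeight P) (polyHeight Q) ≤ max (polyHeight P') (polyHeight Q'))

lemma natAbs_coeff_le_polyHeight (P : Polynomial ℤ) (i : ℕ) :
    (P.coeff i).natAbs ≤ polyHeight P := by
  by_cases hi : i ∈ P.support
  · exact Finset.le_sup (f := fun i => (P.coeff i).natAbs) hi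
  · simp [Polynomial.notMem_support_iff.mp hi]

lemma finite_natDegree_le_polyHeight_le (r h : ℕ) :
    {P : Polynomial ℤ | P.natDegree ≤ r ∧ polyHeight P ≤ h}.Finite := by
  -- Such a polynomial is determined by its first `r + 1` coefficients, which lie in `[-h, h]`.
  refine Set.Finite.of_injOn (f := fun P (i : Fin (r + 1)) => P.coeff i)
    (t := Set.univ.pi fun _ => Set.Icc (-(h : ℤ)) h) ?_ ?_
    (Set.Finite.pi fun _ => Set.finite_Icc _ _)
  · rintro P ⟨-, hP⟩ i -
    have := natAbs_coeff_le_polyHeight P i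
    simp only [Set.mem_Icc]
    omega
  · rintro P ⟨hP, -⟩ P' ⟨hP', -⟩ hPP'
    ext n
    by_cases hn : n < r + 1
    · exact congrFun hPP' ⟨n, hn⟩
    · rw [Polynomial.coeff_eq_zero_of_natDegree_lt (by omega),
        Polynomial.coeff_eq_zero_of_natDegree_lt (by omega)]

/-- Clearing denominators in the expression of `β` as a polynomial in `α` of degree `< deg α`. -/
lemma exists_pair_natDegree_lt {α β : ℂ} (hα : IsAlgebraic ℚ α)
    (hβ : β ∈ Algebra.adjoin ℚ {α}) :
    ∃ P Q : Polynomial ℤ, ¬(P = 0 ∧ Q = 0) ∧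
      Polynomial.aeval α P + β * Polynomial.aeval α Q = 0 ∧
      max P.natDegree Q.natDegree < (minpoly ℚ α).natDegree := by
  have hint : IsIntegral ℚ α := hα.isIntegral
  rw [Algebra.adjoin_singleton_eq_range_aeval] at hβ
  obtain ⟨p, rfl⟩ := hβ
  have hdeg := Polynomial.natDegree_modByMonic_lt p (minpoly.monic hint) (minpoly.ne_one ℚ α)
  have heval : aeval α (p %ₘ minpoly ℚ α) = aeval α p :=
    Polynomial.aeval_modByMonic_eq_self_of_root (minpoly.aeval ℚ α)
  obtain ⟨b, hbmem, hb⟩ :=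
    IsLocalization.integerNormalization_spec (nonZeroDivisors ℤ) (p %ₘ minpoly ℚ α)
  have hb0 : b ≠ 0 := nonZeroDivisors.ne_zero hbmem
  set N := IsLocalization.integerNormalization (nonZeroDivisors ℤ) (p %ₘ minpoly ℚ α)
  refine ⟨-N, Polynomial.C b, fun h => hb0 (Polynomial.C_eq_zero.mp h.2), ?_, ?_⟩
  · have hN : aeval α N = (b : ℂ) * aeval α p := by
      rw [← Polynomial.aeval_map_algebraMap ℚ α N, hb, map_zsmul, heval, zsmul_eq_mul]
    change aeval α (-N) + aeval α p * aeval α (Polynomial.C b) = 0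
    rw [map_neg, hN, Polynomial.aeval_C, algebraMap_int_eq, eq_intCast]
    ring
  · have hNdeg : N.natDegree ≤ (p %ₘ minpoly ℚ α).natDegree := by
      rw [← Polynomial.natDegree_map_eq_of_injective (algebraMap ℤ ℚ).injective_int N, hb]
      exact Polynomial.natDegree_smul_le _ _
    simp only [Polynomial.natDegree_neg, Polynomial.natDegree_C]
    omega

lemma natDegree_minpoly_le_of_aeval_eq_zero {α : ℂ} {P : Polynomial ℤ} (hP : P ≠ 0)
    (h : Polynomial.aeval α P = 0) : (minpoly ℚ α).natDegree ≤ P.natDegree := by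
  rw [← Polynomial.natDegree_map_eq_of_injective (algebraMap ℤ ℚ).injective_int P]
  refine Polynomial.natDegree_le_of_dvd (minpoly.dvd ℚ α ?_) ?_
  · rwa [Polynomial.aeval_map_algebraMap]
  · rwa [Ne, Polynomial.map_eq_zero_iff (algebraMap ℤ ℚ).injective_int]

lemma IsMinimalPair.aeval_right_ne_zero {α β : ℂ} (hα : IsAlgebraic ℚ α)
    (hβ : β ∈ Algebra.adjoin ℚ {α}) {P Q : Polynomial ℤ} (h : IsMinimalPair α β P Q) :
    Polynomial.aeval α Q ≠ 0 := by
  intro hQ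
  obtain ⟨h0, h1, h2, -⟩ := h
  obtain ⟨P₁, Q₁, h0', h1', hlt⟩ := exists_pair_natDegree_lt hα hβ
  have hle := h2 P₁ Q₁ h0' h1'
  have hP : Polynomial.aeval α P = 0 := by simpa [hQ] using h1
  by_cases hP0 : P = 0
  · have := natDegree_minpoly_le_of_aeval_eq_zero (fun hQ0 => h0 ⟨hP0, hQ0⟩) hQ
    omega
  · have := natDegree_minpoly_le_of_aeval_eq_zero hP0 hP
    omega

lemma IsMinimalPair.aeval_derivative_ne_zero {α β : ℂ} (hβ : ∀ q : ℚ, (q : ℂ) ≠ β)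
    {P Q : Polynomial ℤ} (h : IsMinimalPair α β P Q) :
    Polynomial.aeval α P.derivative + β * Polynomial.aeval α Q.derivative ≠ 0 := by
  intro hd
  obtain ⟨h0, h1, h2, -⟩ := h
  by_cases hmax : max P.natDegree Q.natDegree = 0
  · -- Both polynomials are constant, so `β` would be the rational number `-P / Q`.
    obtain ⟨a, rfl⟩ := Polynomial.natDegree_eq_zero.mp (Nat.eq_zero_of_le_zero
      ((le_max_left _ _).trans hmax.le))
    obtain ⟨b, rfl⟩ := Polynomial.natDegree_eq_zero.mp (Nat.eq_zero_of_le_zero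
      ((le_max_right _ _).trans hmax.le))
    rw [Polynomial.aeval_C, Polynomial.aeval_C, algebraMap_int_eq, eq_intCast, eq_intCast] at h1
    by_cases hb : b = 0
    · subst hb
      apply h0
      simpa using h1
    · have hb' : (b : ℂ) ≠ 0 := by exact_mod_cast hb
      apply hβ (-a / b)
      push_cast
      field_simp
      linear_combination -h1
  · by_cases hz : P.derivative = 0 ∧ Q.derivative = 0
    · have hP := Polynomial.derivative_eq_zero.mp hz.1
      have hQ := Polynomial.derivative_eq_zero.mp hz.2
      omega
    · have := h2 _ _ hz hd
      have hP := Polynomial.natDegree_derivative_le P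
      have hQ := Polynomial.natDegree_derivative_le Q
      omega

lemma IsMinimalPair.aeval_wronskian_ne_zero {α β : ℂ} (hα : IsAlgebraic ℚ α)
    (hβmem : β ∈ Algebra.adjoin ℚ {α}) (hβ : ∀ q : ℚ, (q : ℂ) ≠ β)
    {P Q : Polynomial ℤ} (h : IsMinimalPair α β P Q) :
    Polynomial.aeval α (P * Q.derivative - Q * P.derivative) ≠ 0 := by
  have key : Polynomial.aeval α (P * Q.derivative - Q * P.derivative) =
      -(Polynomial.aeval α Q *
        (Polynomial.aeval α P.derivative + β * Polynomial.aeval α Q.derivative)) := by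
    simp only [map_sub, map_mul]
    linear_combination Polynomial.aeval α Q.derivative * h.2.1
  rw [key]
  exact neg_ne_zero.mpr (mul_ne_zero (h.aeval_right_ne_zero hα hβmem)
    (h.aeval_derivative_ne_zero hβ))

/-- Any two minimal pairs have the same degree and the same height, so there are only finitely
many of them. -/
lemma finite_isMinimalPair (α β : ℂ) :
    {p : Polynomial ℤ × Polynomial ℤ | IsMinimalPair α β p.1 p.2}.Finite := by
  by_cases hne : ∃ P Q : Polynomial ℤ, IsMinimalPair α β P Q
  · obtain ⟨P₀, Q₀, h0, h1, h2, -⟩ := hne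
    have hfin := finite_natDegree_le_polyHeight_le (max P₀.natDegree Q₀.natDegree)
      (max (polyHeight P₀) (polyHeight Q₀))
    refine (hfin.prod hfin).subset ?_
    rintro ⟨P, Q⟩ ⟨g0, g1, g2, g3⟩
    have hd := le_antisymm (g2 P₀ Q₀ h0 h1) (h2 P Q g0 g1)
    have hh := g3 P₀ Q₀ h0 h1 hd.symm
    exact ⟨⟨(le_max_left _ _).trans hd.le, (le_max_left _ _).trans hh⟩,
      ⟨(le_max_right _ _).trans hd.le, (le_max_right _ _).trans hh⟩⟩
  · convert Set.finite_empty
    ext ⟨P, Q⟩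
    simpa using fun h => hne ⟨P, Q, h⟩

/-- Let `α ∈ ℂ` be an algebraic number of degree `d` over `ℚ`, let `β ∈ ℚ(α)` be
irrational, let `P, Q` be a minimal pair for `(α, β)` and let
`W = P·Q′ − Q·P′` be the Wronskian of `P` and `Q`. Then `W(α) ≠ 0`, and there exists
a positive real `C₁₃`, depending only on `α` and `β`, such that `|W(α)| ≥ C₁₃`. -/
theorem minimal_pair_wronskian_lower_bound
    (α : ℂ) (hα : IsAlgebraic ℚ α) (d : ℕ) (hdeg : (minpoly ℚ α).natDegree = d)
    (β : ℂ) (hβmem : β ∈ Algebra.adjoin ℚ {α}) (hβirr : ∀ q : ℚ, (q : ℂ) ≠ β) :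
    (∀ P Q : Polynomial ℤ, IsMinimalPair α β P Q →
      Polynomial.aeval α (P * Q.derivative - Q * P.derivative) ≠ 0) ∧
    ∃ C₁₃ : ℝ, 0 < C₁₃ ∧
      ∀ P Q : Polynomial ℤ, IsMinimalPair α β P Q →
        C₁₃ ≤ ‖Polynomial.aeval α (P * Q.derivative - Q * P.derivative)‖ := by
  refine ⟨fun P Q h => h.aeval_wronskian_ne_zero hα hβmem hβirr, ?_⟩
  rcases Set.eq_empty_or_nonempty
    {p : Polynomial ℤ × Polynomial ℤ | IsMinimalPair α β p.1 p.2} with hemp | hne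
  · refine ⟨1, one_pos, fun P Q h => ?_⟩
    have : (P, Q) ∈ {p : Polynomial ℤ × Polynomial ℤ | IsMinimalPair α β p.1 p.2} := h
    simp [hemp] at this
  · obtain ⟨⟨P₀, Q₀⟩, h₀, hmin⟩ := Set.exists_min_image _
      (fun p : Polynomial ℤ × Polynomial ℤ =>
        ‖Polynomial.aeval α (p.1 * p.2.derivative - p.2 * p.1.derivative)‖)
      (finite_isMinimalPair α β) hne
    have h₀' : IsMinimalPair α β P₀ Q₀ := h₀
    exact ⟨_, norm_pos_iff.mpr (h₀'.aeval_wronskian_ne_zero hα hβmem hβirr),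
      fun P Q h => hmin (P, Q) h⟩
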